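/- Let d ≥ 1, C > 0, T > 0, and let D : [0,T] → (0,∞) be differentiable with D(t) ≤ d for all t ∈ [0,T] and D′(t) ≤ C D(t) ( 1 + log( 16 d / D(t) ) ) for all t ∈ [0,T]. Then for all t ∈ [0,T], D(t) ≤ 16 d · exp[ 1 − ( 1 + log( 16 d / D(0) ) ) e^{−C t} ]. -/

import Mathlib

open MeasureTheory Real Set
open scoped ENNReal

noncomputable section

/-- The fundamental domain `[0,1)^d` of the flat torus `𝕋^d = ℝ^d/ℤ^d`. -/
def Tcube (d : ℕ) : Set (Fin d → ℝ) := Set.univ.pi fun _ => Set.Ico (0:ℝ) 1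

/-- The Haar (Lebesgue) probability measure on the torus `𝕋^d`, realised as Lebesgue
measure restricted to the fundamental domain `[0,1)^d`. -/
def torusMeasure (d : ℕ) : Measure (Fin d → ℝ) := volume.restrict (Tcube d)

/-- The Euclidean norm on `ℝ^d`. -/
def euclNorm {d : ℕ} (v : Fin d → ℝ) : ℝ := Real.sqrt (∑ i, (v i) ^ 2)

/-- The lattice vector in `ℝ^d` associated to `k ∈ ℤ^d`. -/
def latVec {d : ℕ} (k : Fin d → ℤ) : Fin d → ℝ := fun i => (k i : ℝ)

/-- `ℤ^d`-periodicity of a function on `ℝ^d`; such functions are exactly the functions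
on the torus `𝕋^d`. -/
def ZPeriodic {d : ℕ} {α : Type*} (f : (Fin d → ℝ) → α) : Prop :=
  ∀ (x : Fin d → ℝ) (k : Fin d → ℤ), f (x + latVec k) = f x

/-- The quotient (flat) metric on the torus `𝕋^d`, expressed on representatives in `ℝ^d`. -/
def tdist {d : ℕ} (x y : Fin d → ℝ) : ℝ := ⨅ k : Fin d → ℤ, euclNorm (x - y + latVec k)

/-- The gradient of a scalar function on `ℝ^d`, as an `ℝ^d`-valued function. -/
def grad {d : ℕ} (U : (Fin d → ℝ) → ℝ) (x : Fin d → ℝ) : Fin d → ℝ :=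
  fun i => fderiv ℝ U x (Pi.single i 1)

/-- The Laplacian: the sum of the second partial derivatives. -/
def lap {d : ℕ} (U : (Fin d → ℝ) → ℝ) (x : Fin d → ℝ) : ℝ :=
  ∑ i, fderiv ℝ (fun y => fderiv ℝ U y (Pi.single i 1)) x (Pi.single i 1)

/-- The Hessian matrix of second partial derivatives. -/
def hess {d : ℕ} (U : (Fin d → ℝ) → ℝ) (x : Fin d → ℝ) : Fin d → Fin d → ℝ :=
  fun i j => fderiv ℝ (fun y => fderiv ℝ U y (Pi.single j 1)) x (Pi.single i 1)

/-- Frobenius (Euclidean) norm of a `d × d` matrix. -/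
def frobNorm {d : ℕ} (M : Fin d → Fin d → ℝ) : ℝ := Real.sqrt (∑ i, ∑ j, (M i j) ^ 2)

/-- Euclidean dot product on `ℝ^d`. -/
def dotP {d : ℕ} (v w : Fin d → ℝ) : ℝ := ∑ i, v i * w i

/-- `HolderBnd α u K` expresses that the Hölder norm `‖u‖_{C^{0,α}(𝕋^d)}`, i.e. the sup
norm plus the `α`-Hölder seminorm with respect to the torus metric, is at most `K`. -/
def HolderBnd {d : ℕ} (α : ℝ) (u : (Fin d → ℝ) → ℝ) (K : ℝ) : Prop :=
  ∃ A B : ℝ, 0 ≤ A ∧ 0 ≤ B ∧ A + B ≤ K ∧ (∀ x, |u x| ≤ A) ∧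
    ∀ x y, |u x - u y| ≤ B * tdist x y ^ α

/-- Hölder norm bound for an `ℝ^d`-valued function, with the Euclidean norm on values. -/
def HolderBndVec {d : ℕ} (α : ℝ) (G : (Fin d → ℝ) → Fin d → ℝ) (K : ℝ) : Prop :=
  ∃ A B : ℝ, 0 ≤ A ∧ 0 ≤ B ∧ A + B ≤ K ∧ (∀ x, euclNorm (G x) ≤ A) ∧
    ∀ x y, euclNorm (G x - G y) ≤ B * tdist x y ^ α

/-- Hölder norm bound for a matrix-valued function. -/
def HolderBndMat {d : ℕ} (α : ℝ) (M : (Fin d → ℝ) → Fin d → Fin d → ℝ) (K : ℝ) : Prop :=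
  ∃ A B : ℝ, 0 ≤ A ∧ 0 ≤ B ∧ A + B ≤ K ∧ (∀ x, frobNorm (M x) ≤ A) ∧
    ∀ x y, frobNorm (M x - M y) ≤ B * tdist x y ^ α

/-- `C1Bnd α u K` expresses `‖u‖_{C^{1,α}(𝕋^d)} ≤ K` (the `C^{0,α}` norm of `u` plus the
`C^{0,α}` norm of its gradient is at most `K`). -/
def C1Bnd {d : ℕ} (α : ℝ) (u : (Fin d → ℝ) → ℝ) (K : ℝ) : Prop :=
  ∃ K₀ K₁ : ℝ, 0 ≤ K₀ ∧ 0 ≤ K₁ ∧ K₀ + K₁ ≤ K ∧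
    HolderBnd α u K₀ ∧ HolderBndVec α (grad u) K₁

/-- `C2Bnd α u K` expresses that the second derivatives of `u` are `α`-Hölder continuous
and `‖u‖_{C^{2,α}(𝕋^d)} ≤ K`. -/
def C2Bnd {d : ℕ} (α : ℝ) (u : (Fin d → ℝ) → ℝ) (K : ℝ) : Prop :=
  ∃ K₀ K₁ K₂ : ℝ, 0 ≤ K₀ ∧ 0 ≤ K₁ ∧ 0 ≤ K₂ ∧ K₀ + K₁ + K₂ ≤ K ∧
    HolderBnd α u K₀ ∧ HolderBndVec α (grad u) K₁ ∧ HolderBndMat α (hess u) K₂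

/-- A coupling of two measures: a measure on the product whose marginals are `μ` and `ν`. -/
def IsCoupling {X : Type*} [MeasurableSpace X] (cpl : Measure (X × X)) (μ ν : Measure X) : Prop :=
  cpl.map Prod.fst = μ ∧ cpl.map Prod.snd = ν

/-- `W_q^q`: the `q`-th power of the Wasserstein distance of order `q` on the torus,
defined as the infimum over couplings of the integral of the `q`-th power of the torus
distance. -/
def WassPow {d : ℕ} (q : ℝ) (μ ν : Measure (Fin d → ℝ)) : ℝ :=
  sInf { c | ∃ cpl : Measure ((Fin d → ℝ) × (Fin d → ℝ)), IsProbabilityMeasure cpl ∧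
    IsCoupling cpl μ ν ∧ c = ∫ z, tdist z.1 z.2 ^ q ∂cpl }

/-- The Wasserstein distance of order `p` on the torus. -/
def Wass {d : ℕ} (p : ℝ) (μ ν : Measure (Fin d → ℝ)) : ℝ :=
  sInf { c | ∃ cpl : Measure ((Fin d → ℝ) × (Fin d → ℝ)), IsProbabilityMeasure cpl ∧
    IsCoupling cpl μ ν ∧ c = (∫ z, tdist z.1 z.2 ^ p ∂cpl) ^ (1/p) }

/-- The measure `h dx` on the torus associated to a density `h`. -/
def densMeasure {d : ℕ} (h : (Fin d → ℝ) → ℝ) : Measure (Fin d → ℝ) :=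
  (torusMeasure d).withDensity fun x => ENNReal.ofReal (h x)

/-- The `L^p(𝕋^d)` norm (as a real number). -/
def LpNorm {d : ℕ} (p : ℝ≥0∞) (u : (Fin d → ℝ) → ℝ) : ℝ :=
  (eLpNorm u p (torusMeasure d)).toReal

/-- `U` is a weak solution of `ε² Δ U = g` on the torus:
`ε² ∫ ∇U·∇φ dx = −∫ g φ dx` for every smooth (periodic) test function `φ`. -/
def IsWeakPoisson {d : ℕ} (ε : ℝ) (U g : (Fin d → ℝ) → ℝ) : Prop :=
  ∀ φ : (Fin d → ℝ) → ℝ, ContDiff ℝ (⊤ : ℕ∞) φ → ZPeriodic φ →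
    ε ^ 2 * ∫ x, dotP (grad U x) (grad φ x) ∂(torusMeasure d) =
      - ∫ x, g x * φ x ∂(torusMeasure d)

end
noncomputable section

/-- The rescaled mollifier `χ_r(x) = r^{-d} χ(x/r)` on `ℝ^d`. -/
def scaledMollifier {d : ℕ} (χ : (Fin d → ℝ) → ℝ) (r : ℝ) (x : Fin d → ℝ) : ℝ :=
  (r ^ d)⁻¹ * χ (fun i => x i / r)

/-- The `ℤ^d`-periodisation of a function on `ℝ^d`, giving a function on the torus. -/
def periodised {d : ℕ} (g : (Fin d → ℝ) → ℝ) (x : Fin d → ℝ) : ℝ :=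
  ∑' k : Fin d → ℤ, g (x + latVec k)

/-- The measure `χ_r ∗ μ` on the torus: the measure with density
`x ↦ ∫ χ_r(x − y) dμ(y)` with respect to the Haar measure (with `χ_r` periodised). -/
def mollifyMeasure {d : ℕ} (χ : (Fin d → ℝ) → ℝ) (r : ℝ) (μ : Measure (Fin d → ℝ)) :
    Measure (Fin d → ℝ) :=
  (torusMeasure d).withDensity fun x =>
    ENNReal.ofReal (∫ y, periodised (scaledMollifier χ r) (x - y) ∂μ)

/-- A Borel probability measure on the torus `𝕋^d`, realised as a probability measure on
`ℝ^d` carried by the fundamental domain. -/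
def IsTorusProb {d : ℕ} (μ : Measure (Fin d → ℝ)) : Prop :=
  IsProbabilityMeasure μ ∧ μ (Tcube d)ᶜ = 0

/-- The set `A_d` of allowed Hölder exponents: `(0,1)` if `d = 2`, `(0,1/5]` if `d = 3`. -/
def Aset (d : ℕ) : Set ℝ := if d = 2 then Set.Ioo 0 1 else Set.Ioc 0 (1/5)

end
/-- Osgood/Grönwall-type lemma with a logarithmic factor: if
`0 < D ≤ d` and `D′ ≤ C D (1 + log(16d/D))` on `[0,T]`, then
`D(t) ≤ 16d · exp[1 − (1 + log(16d/D(0))) e^{−Ct}]` on `[0,T]`. -/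
theorem statement17 (d : ℕ) (hd : 1 ≤ d) (C T : ℝ) (hC : 0 < C) (hT : 0 < T)
    (D D' : ℝ → ℝ)
    (hderiv : ∀ t ∈ Set.Icc (0:ℝ) T, HasDerivAt D (D' t) t)
    (hpos : ∀ t ∈ Set.Icc (0:ℝ) T, 0 < D t)
    (hle : ∀ t ∈ Set.Icc (0:ℝ) T, D t ≤ d)
    (hineq : ∀ t ∈ Set.Icc (0:ℝ) T,
      D' t ≤ C * D t * (1 + Real.log (16 * d / D t))) :
    ∀ t ∈ Set.Icc (0:ℝ) T,
      D t ≤ 16 * d *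
        Real.exp (1 - (1 + Real.log (16 * d / D 0)) * Real.exp (-C * t)) := by
  have hd' : (0:ℝ) < 16 * d := by
    have : (1:ℝ) ≤ d := by exact_mod_cast hd
    linarith
  have hg : ∀ s ∈ Set.Icc (0:ℝ) T,
      HasDerivAt (fun s => (1 + (Real.log (16 * d) - Real.log (D s))) * Real.exp (C * s))
        ((-(D' s / D s)) * Real.exp (C * s) +
          (1 + (Real.log (16 * d) - Real.log (D s))) * (Real.exp (C * s) * C)) s := by
    intro s hs
    have h1 := (((hderiv s hs).log (hpos s hs).ne').const_sub (Real.log (16 * d))).const_add 1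
    have h2 : HasDerivAt (fun s => Real.exp (C * s)) (Real.exp (C * s) * C) s := by
      simpa using ((hasDerivAt_id s).const_mul C).exp
    exact h1.mul h2
  have hmono : MonotoneOn
      (fun s => (1 + (Real.log (16 * d) - Real.log (D s))) * Real.exp (C * s))
      (Set.Icc (0:ℝ) T) := by
    apply monotoneOn_of_deriv_nonneg (convex_Icc 0 T)
    · exact fun s hs => (hg s hs).continuousAt.continuousWithinAt
    · exact fun s hs => (hg s (interior_subset hs)).differentiableAt.differentiableWithinAt
    · intro s hs
      have hs' := interior_subset hs
      rw [(hg s hs').deriv]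
      have hp := hpos s hs'
      have hi := hineq s hs'
      rw [Real.log_div hd'.ne' hp.ne'] at hi
      have hq : D' s / D s ≤ C * (1 + (Real.log (16 * d) - Real.log (D s))) := by
        rw [div_le_iff₀ hp]
        linarith
      have := mul_nonneg (sub_nonneg.2 hq) (Real.exp_pos (C * s)).le
      linarith
  intro t ht
  have h0 : (0:ℝ) ∈ Set.Icc (0:ℝ) T := ⟨le_rfl, hT.le⟩
  have hm := hmono h0 ht ht.1
  simp only [mul_zero, Real.exp_zero, mul_one] at hm
  have hp := hpos t ht
  rw [Real.log_div hd'.ne' (hpos 0 h0).ne', ← Real.log_le_log_iff hp (by positivity),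
    Real.log_mul hd'.ne' (Real.exp_pos _).ne', Real.log_exp]
  have h3 := mul_le_mul_of_nonneg_right hm (Real.exp_pos (-C * t)).le
  rw [mul_assoc, ← Real.exp_add, show C * t + -C * t = 0 by ring, Real.exp_zero, mul_one] at h3
  linarith
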